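/- (Nonexistence criterion, left-focal problem) If ∑_{s=a+2}^{b} |q(s)| < (α − 1)/(b − a − 1), then the only function u : N[a+1,b] → ℝ satisfying u(t) = ∑_{s=a+2}^{b} G_l(t, s) q(s) u(s) for every t with a+1 ≤ t ≤ b (the Green's-function form of the left-focal fractional boundary value problem ∇_a^α u(t) + q(t)u(t) = 0 for a+2 ≤ t ≤ b, with ∇_a^{α−1} u(a+1) = 0 and u(b) = 0) is the identically zero function. -/

import Mathlib

/-- Rising factorial `rf x r = Γ(x+r)/Γ(x)`, with the convention `rf 0 r = 0`. -/
noncomputable def rf (x r : ℝ) : ℝ := if x = 0 then 0 else Real.Gamma (x + r) / Real.Gamma x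

/-- The left-focal Green's function. -/
noncomputable def Gl (a b : ℤ) (α : ℝ) (t s : ℤ) : ℝ :=
  if t ≤ s - 1 then
    (1 / Real.Gamma α) *
      (rf (b - s + 1 : ℝ) (α - 1) * rf (t - a : ℝ) (α - 2) / rf (b - a : ℝ) (α - 2))
  else
    (1 / Real.Gamma α) *
      (rf (b - s + 1 : ℝ) (α - 1) * rf (t - a : ℝ) (α - 2) / rf (b - a : ℝ) (α - 2) -
        rf (t - s + 1 : ℝ) (α - 1))

/-!
The equation at `t ∈ [a + 2, b]` involves only values of `u` on `[a + 2, b]`, so `u` vanishes there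
as soon as the kernel is small on that square, and then the equation at `t = a + 1` gives
`u (a + 1) = 0`. On the square, `Gl` is `1 / Γ(α)` times a difference of two nonnegative terms, each
at most `(b - a - 1) Γ(α)` because, by log-convexity of `Γ`, `rf x r` increases in `x` for `r ≥ 0`
and decreases for `r ≤ 0`. Leaving out the point `t = a + 1`, where
`Gl a b α (a + 1) (a + 2) = (b - a - 1) / (α - 1)`, is what improves `α - 1` to `1` in the
smallness condition.
-/

theorem forall_mem_eq_zero_of_eq_sum_kernel {ι R : Type*} [NonUnitalNormedRing R] {S : Finset ι}
    {K : ι → ι → R} {q u : ι → R} {M : ℝ} (hK : ∀ t ∈ S, ∀ s ∈ S, ‖K t s‖ ≤ M)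
    (hq : (∑ s ∈ S, ‖q s‖) * M < 1) (hu : ∀ t ∈ S, u t = ∑ s ∈ S, K t s * q s * u s) :
    ∀ t ∈ S, u t = 0 := by
  intro t ht
  obtain ⟨t₀, ht₀, hmax⟩ := S.exists_max_image (‖u ·‖) ⟨t, ht⟩
  have norm_le : ‖u t₀‖ ≤ ((∑ s ∈ S, ‖q s‖) * M) * ‖u t₀‖ := by
    calc ‖u t₀‖ = ‖∑ s ∈ S, K t₀ s * q s * u s‖ := congrArg norm (hu t₀ ht₀)
      _ ≤ ∑ s ∈ S, ‖q s‖ * M * ‖u t₀‖ := norm_sum_le_of_le S fun s hs ↦ by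
        calc ‖K t₀ s * q s * u s‖ ≤ ‖K t₀ s‖ * ‖q s‖ * ‖u s‖ := norm_mul₃_le
          _ ≤ M * ‖q s‖ * ‖u t₀‖ := by
            gcongr
            · exact mul_nonneg ((norm_nonneg _).trans (hK t₀ ht₀ s hs)) (norm_nonneg _)
            · exact hK t₀ ht₀ s hs
            · exact hmax s hs
          _ = ‖q s‖ * M * ‖u t₀‖ := by rw [mul_comm M]
      _ = ((∑ s ∈ S, ‖q s‖) * M) * ‖u t₀‖ := by rw [Finset.sum_mul, Finset.sum_mul]
  have norm_eq_zero : ‖u t₀‖ = 0 := by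
    by_contra hne
    exact (mul_lt_of_lt_one_left ((norm_nonneg _).lt_of_ne' hne) hq).not_ge norm_le
  exact norm_le_zero_iff.mp ((hmax t ht).trans norm_eq_zero.le)

theorem map_add_sub_map_le_of_convexOn {I : Set ℝ} {f : ℝ → ℝ} (hf : ConvexOn ℝ I f) {x y r : ℝ}
    (hx : x ∈ I) (hyr : y + r ∈ I) (hxy : x ≤ y) (hr : 0 ≤ r) :
    f (x + r) - f x ≤ f (y + r) - f y := by
  rcases hr.eq_or_lt with rfl | hr
  · simp
  have mem_of_mem_Icc : ∀ z ∈ Set.Icc x (y + r), z ∈ I := hf.1.ordConnected.out hx hyr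
  have hxr : x + r ∈ I := mem_of_mem_Icc _ ⟨by linarith, by linarith⟩
  have hy : y ∈ I := mem_of_mem_Icc _ ⟨hxy, by linarith⟩
  have slope_le :=
    calc (f (x + r) - f x) / (x + r - x) ≤ (f (y + r) - f x) / (y + r - x) :=
          hf.secant_mono hx hxr hyr (by linarith) (by linarith) (by linarith)
      _ = (f x - f (y + r)) / (x - (y + r)) := by rw [← neg_sub, ← neg_sub x, neg_div_neg_eq]
      _ ≤ (f y - f (y + r)) / (y - (y + r)) :=
          hf.secant_mono hyr hx hy (by linarith) (by linarith) hxy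
      _ = (f (y + r) - f y) / (y + r - y) := by rw [← neg_sub, ← neg_sub (y + r), neg_div_neg_eq]
  rwa [add_sub_cancel_left, add_sub_cancel_left, div_le_div_iff_of_pos_right hr] at slope_le

section RisingFactorial

variable {x y r α : ℝ}

theorem rf_of_ne_zero (hx : x ≠ 0) (r : ℝ) : rf x r = Real.Gamma (x + r) / Real.Gamma x :=
  if_neg hx

theorem rf_pos (hx : 0 < x) (hxr : 0 < x + r) : 0 < rf x r := by
  rw [rf_of_ne_zero hx.ne']
  exact div_pos (Real.Gamma_pos_of_pos hxr) (Real.Gamma_pos_of_pos hx)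

theorem rf_two (r : ℝ) : rf 2 r = Real.Gamma (2 + r) := by
  rw [rf_of_ne_zero two_ne_zero, Real.Gamma_two, div_one]

theorem rf_add_one_right (hx : 0 < x) (r : ℝ) : rf x (r + 1) = x * rf (x + 1) r := by
  rw [rf_of_ne_zero hx.ne', rf_of_ne_zero (by linarith), Real.Gamma_add_one hx.ne', ← mul_div_assoc,
    mul_div_mul_left _ _ hx.ne', add_right_comm, add_assoc]

theorem rf_neg (hx : 0 < x) (hxr : 0 < x - r) : rf x (-r) = (rf (x - r) r)⁻¹ := by
  rw [rf_of_ne_zero hx.ne', rf_of_ne_zero hxr.ne', inv_div, sub_add_cancel, ← sub_eq_add_neg]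

theorem rf_le_rf_of_nonneg (hr : 0 ≤ r) (hx : 0 < x) (hxy : x ≤ y) : rf x r ≤ rf y r := by
  have log_rf : ∀ z, 0 < z →
      Real.log (rf z r) = Real.log (Real.Gamma (z + r)) - Real.log (Real.Gamma z) := by
    intro z hz
    rw [rf_of_ne_zero hz.ne', Real.log_div (Real.Gamma_pos_of_pos (by linarith)).ne'
      (Real.Gamma_pos_of_pos hz).ne']
  have hy : 0 < y := hx.trans_le hxy
  rw [← Real.log_le_log_iff (rf_pos hx (by linarith)) (rf_pos hy (by linarith)), log_rf x hx,
    log_rf y hy]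
  exact map_add_sub_map_le_of_convexOn Real.convexOn_log_Gamma hx (Set.mem_Ioi.2 (by linarith)) hxy
    hr

theorem rf_le_rf_of_nonpos (hr : r ≤ 0) (hx : 0 < x + r) (hxy : x ≤ y) : rf y r ≤ rf x r := by
  obtain ⟨p, rfl⟩ : ∃ p, r = -p := ⟨-r, (neg_neg r).symm⟩
  rw [← sub_eq_add_neg] at hx
  rw [rf_neg (by linarith) hx, rf_neg (by linarith) (by linarith)]
  exact inv_anti₀ (rf_pos hx (by linarith))
    (rf_le_rf_of_nonneg (by linarith) hx (by linarith))

theorem rf_sub_one_le_mul_rf_sub_two (hα : 1 ≤ α) (hx : 0 < x) (hxy : x ≤ y - 1) :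
    rf x (α - 1) ≤ (y - 1) * rf y (α - 2) := by
  calc rf x (α - 1) ≤ rf (y - 1) (α - 1) := rf_le_rf_of_nonneg (by linarith) hx hxy
    _ = rf (y - 1) (α - 2 + 1) := by congr 1; ring
    _ = (y - 1) * rf y (α - 2) := by rw [rf_add_one_right (hx.trans_le hxy), sub_add_cancel]

theorem rf_sub_two_le_Gamma (hα0 : 0 < α) (hα2 : α ≤ 2) (hx : 2 ≤ x) :
    rf x (α - 2) ≤ Real.Gamma α := by
  calc rf x (α - 2) ≤ rf 2 (α - 2) := rf_le_rf_of_nonpos (by linarith) (by linarith) hx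
    _ = Real.Gamma α := by rw [rf_two, add_sub_cancel]

end RisingFactorial

theorem abs_Gl_le {a b : ℤ} {α : ℝ} (hα1 : 1 ≤ α) (hα2 : α ≤ 2) {t s : ℤ}
    (ht : t ∈ Finset.Icc (a + 2) b) (hs : s ∈ Finset.Icc (a + 2) b) :
    |Gl a b α t s| ≤ b - a - 1 := by
  obtain ⟨hat, htb⟩ : (a + 2 : ℝ) ≤ t ∧ (t : ℝ) ≤ b := by exact_mod_cast Finset.mem_Icc.mp ht
  obtain ⟨has, hsb⟩ : (a + 2 : ℝ) ≤ s ∧ (s : ℝ) ≤ b := by exact_mod_cast Finset.mem_Icc.mp hs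
  have hΓ : 0 < Real.Gamma α := Real.Gamma_pos_of_pos (by linarith)
  have hD : 0 < rf (b - a : ℝ) (α - 2) := rf_pos (by linarith) (by linarith)
  have hrf_s : 0 < rf (b - s + 1 : ℝ) (α - 1) := rf_pos (by linarith) (by linarith)
  have hrf_t : 0 < rf (t - a : ℝ) (α - 2) := rf_pos (by linarith) (by linarith)
  set A := rf (b - s + 1 : ℝ) (α - 1) * rf (t - a : ℝ) (α - 2) / rf (b - a : ℝ) (α - 2) with hA
  have A_nonneg : 0 ≤ A := by positivity
  have A_le : A ≤ (b - a - 1) * Real.Gamma α := by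
    rw [hA, div_le_iff₀ hD, mul_right_comm]
    exact mul_le_mul (rf_sub_one_le_mul_rf_sub_two hα1 (by linarith) (by linarith))
      (rf_sub_two_le_Gamma (by linarith) hα2 (by linarith)) hrf_t.le
      (mul_nonneg (by linarith) hD.le)
  have abs_scale_le {z : ℝ} (hz : |z| ≤ (b - a - 1) * Real.Gamma α) :
      |1 / Real.Gamma α * z| ≤ b - a - 1 := by
    rwa [one_div_mul_eq_div, abs_div, abs_of_pos hΓ, div_le_iff₀ hΓ]
  unfold Gl
  split_ifs with hts
  · exact abs_scale_le ((abs_of_nonneg A_nonneg).trans_le A_le)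
  · have hst : (s : ℝ) ≤ t := by exact_mod_cast (by omega : s ≤ t)
    have B_le : rf (t - s + 1 : ℝ) (α - 1) ≤ (b - a - 1) * Real.Gamma α := by
      calc rf (t - s + 1 : ℝ) (α - 1) ≤ (b - a - 1) * rf (b - a : ℝ) (α - 2) :=
            rf_sub_one_le_mul_rf_sub_two hα1 (by linarith) (by linarith)
        _ ≤ (b - a - 1) * Real.Gamma α := mul_le_mul_of_nonneg_left
            (rf_sub_two_le_Gamma (by linarith) hα2 (by linarith)) (by linarith)
    exact abs_scale_le (abs_sub_le_of_nonneg_of_le A_nonneg A_le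
      (rf_pos (by linarith) (by linarith)).le B_le)

theorem left_focal_nonexistence_general (a b : ℤ) (α : ℝ) (hα1 : 1 < α) (hα2 : α ≤ 2) (q : ℤ → ℝ)
    (hq : (∑ s ∈ Finset.Icc (a + 2) b, |q s|) * (b - a - 1 : ℝ) < 1) (u : ℤ → ℝ)
    (hu : ∀ t : ℤ, a + 1 ≤ t → t ≤ b →
      u t = ∑ s ∈ Finset.Icc (a + 2) b, Gl a b α t s * q s * u s) :
    ∀ t : ℤ, a + 1 ≤ t → t ≤ b → u t = 0 := by
  have eq_zero_on_Icc : ∀ s ∈ Finset.Icc (a + 2) b, u s = 0 :=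
    forall_mem_eq_zero_of_eq_sum_kernel (fun t ht s hs ↦ abs_Gl_le hα1.le hα2 ht hs) hq
      fun t ht ↦ hu t (by linarith [(Finset.mem_Icc.mp ht).1]) (Finset.mem_Icc.mp ht).2
  intro t hat htb
  rw [hu t hat htb]
  exact Finset.sum_eq_zero fun s hs ↦ by rw [eq_zero_on_Icc s hs, mul_zero]

theorem left_focal_nonexistence (a b : ℤ) (hab : 2 ≤ b - a) (α : ℝ)
    (hα1 : 1 < α) (hα2 : α < 2) (q : ℤ → ℝ)
    (hq : ∑ s ∈ Finset.Icc (a + 2) b, |q s| < (α - 1) / (b - a - 1 : ℝ)) :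
    ∀ u : ℤ → ℝ,
      (∀ t : ℤ, a + 1 ≤ t → t ≤ b →
        u t = ∑ s ∈ Finset.Icc (a + 2) b, Gl a b α t s * q s * u s) →
      ∀ t : ℤ, a + 1 ≤ t → t ≤ b → u t = 0 := by
  have hpos : (0 : ℝ) < b - a - 1 := by exact_mod_cast (by omega : 0 < b - a - 1)
  exact left_focal_nonexistence_general a b α hα1 hα2.le q
    (((lt_div_iff₀ hpos).mp hq).trans (by linarith))
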